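/- If (K,c) ∈ D₁ ∪ D₂, then for every μ ∈ ℝ the system (TV) has no solution (u,w) with u > 0 satisfying condition (HO) with level ū = u₀, the middle (respectively smaller, for D₂) zero of f at which f'(u₀) < 0. -/

import Mathlib

open Set Filter MeasureTheory

noncomputable section

namespace TrafficTW

/-- `f(u) = (K u - V(u) - c)/K`. -/
def fTV (V : ℝ → ℝ) (K c u : ℝ) : ℝ := (K * u - V u - c) / K

/-- `f'(u) = (K - V'(u))/K`. -/
def fdTV (V' : ℝ → ℝ) (K u : ℝ) : ℝ := (K - V' u) / K

/-- `h(u,μ) = f'(u) + μ`. -/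
def hTV (V' : ℝ → ℝ) (K μ u : ℝ) : ℝ := fdTV V' K u + μ

/-- `g₁(u) = 1/(τ κ(1/u))`. -/
def g1TV (κ : ℝ → ℝ) (τ u : ℝ) : ℝ := 1 / (τ * κ (1 / u))

/-- `g₂(u) = u/(2 τ κ(1/u))`. -/
def g2TV (κ : ℝ → ℝ) (τ u : ℝ) : ℝ := u / (2 * τ * κ (1 / u))

/-- The traveling-wave system (TV): `u' = w`, `w' = g₁ f + g₂ h w`. -/
def IsTVSol (V V' κ : ℝ → ℝ) (τ K c μ : ℝ) (u w : ℝ → ℝ) : Prop :=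
  (∀ z, HasDerivAt u (w z) z) ∧
  (∀ z, HasDerivAt w
    (g1TV κ τ (u z) * fTV V K c (u z) + g2TV κ τ (u z) * hTV V' K μ (u z) * w z) z)

/-- Assumption (A1), where `V'` and `V''` are the first and second derivatives of `V`. -/
def A1 (V V' V'' : ℝ → ℝ) (UM : ℝ) : Prop :=
  (∀ u ∈ Ici (0:ℝ), HasDerivWithinAt V (V' u) (Ici 0) u) ∧
  ContinuousOn V' (Ici 0) ∧
  (∀ u ∈ Ioi (0:ℝ), HasDerivAt V' (V'' u) u) ∧
  ContinuousOn V'' (Ioi 0) ∧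
  (∀ u, 0 < u → 0 < V' u) ∧ (∃ M, ∀ u, 0 < u → V' u ≤ M) ∧
  Tendsto V' atTop (nhds 0) ∧
  0 < UM ∧ (∀ u, 0 < u → V' u ≤ V' UM) ∧
  (∀ u, 0 < u → (V'' u = 0 ↔ u = UM))

/-- Assumption (A2). -/
def A2 (κ : ℝ → ℝ) : Prop :=
  ContDiffOn ℝ 1 κ (Ioi 0) ∧ ∀ ρ, 0 < ρ → 0 < κ ρ

/-- `c₀ = -V(0)`. -/
def c0v (V : ℝ → ℝ) : ℝ := - V 0

/-- `c_M(K) = K u_M(K) - V(u_M(K))`, where `uMx` is the function `K ↦ u_M(K)`. -/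
def cMf (V : ℝ → ℝ) (uMx : ℝ → ℝ) (K : ℝ) : ℝ := K * uMx K - V (uMx K)

/-- `c_m(K) = K u_m(K) - V(u_m(K))`, where `umx` is the function `K ↦ u_m(K)`. -/
def cmf (V : ℝ → ℝ) (umx : ℝ → ℝ) (K : ℝ) : ℝ := K * umx K - V (umx K)

/-- `c₁(K) = max (c₀, c_m(K))`. -/
def c1f (V : ℝ → ℝ) (umx : ℝ → ℝ) (K : ℝ) : ℝ := max (c0v V) (cmf V umx K)

/-- `uMx K = u_M(K)` is the unique local maximum point of `u ↦ K u - V(u)`, characterized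
by `u_M(K) ∈ (0, U_M)` and `V'(u_M(K)) = K`, for `K ∈ (K₀, K_M)`. -/
def UMaxHyp (V' : ℝ → ℝ) (UM : ℝ) (uMx : ℝ → ℝ) : Prop :=
  ∀ K, V' 0 < K → K < V' UM → uMx K ∈ Ioo 0 UM ∧ V' (uMx K) = K

/-- `umx K = u_m(K)` is the unique local minimum point of `u ↦ K u - V(u)`, characterized
by `u_m(K) ∈ (U_M, ∞)` and `V'(u_m(K)) = K`, for `K ∈ (0, K_M)`. -/
def UMinHyp (V' : ℝ → ℝ) (UM : ℝ) (umx : ℝ → ℝ) : Prop :=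
  ∀ K, 0 < K → K < V' UM → UM < umx K ∧ V' (umx K) = K

/-- Characterization of `K₁ ∈ (K₀, K_M)`: `c_m(K) < c₀` for `K < K₁` and `c_m(K) > c₀`
for `K > K₁`. -/
def K1Hyp (V V' : ℝ → ℝ) (UM : ℝ) (umx : ℝ → ℝ) (K₁ : ℝ) : Prop :=
  V' 0 < K₁ ∧ K₁ < V' UM ∧
  (∀ K, 0 < K → K < K₁ → cmf V umx K < c0v V) ∧
  cmf V umx K₁ = c0v V ∧
  (∀ K, K₁ < K → K < V' UM → c0v V < cmf V umx K)

/-- The parameter region `D₁`. -/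
def D1 (V V' : ℝ → ℝ) (UM : ℝ) (uMx umx : ℝ → ℝ) : Set (ℝ × ℝ) :=
  {p | V' 0 < p.1 ∧ p.1 < V' UM ∧ c1f V umx p.1 < p.2 ∧ p.2 < cMf V uMx p.1}

/-- The parameter region `D₂`. -/
def D2 (V V' : ℝ → ℝ) (umx : ℝ → ℝ) (K₁ : ℝ) : Set (ℝ × ℝ) :=
  {p | (V' 0 < p.1 ∧ p.1 < K₁ ∧ p.2 = c0v V) ∨
       (0 < p.1 ∧ p.1 < K₁ ∧ cmf V umx p.1 < p.2 ∧ p.2 < c0v V)}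

/-- For `(K,c) ∈ D₁`: `u₁ < u₀ < u₂` are the exactly three positive zeros of `f`. -/
def ZerosD1 (V : ℝ → ℝ) (K c u1 u0 u2 : ℝ) : Prop :=
  0 < u1 ∧ u1 < u0 ∧ u0 < u2 ∧
  fTV V K c u1 = 0 ∧ fTV V K c u0 = 0 ∧ fTV V K c u2 = 0 ∧
  ∀ u, 0 < u → fTV V K c u = 0 → u = u1 ∨ u = u0 ∨ u = u2

/-- For `(K,c) ∈ D₂`: `u₀ < u₂` are the exactly two positive zeros of `f`. -/
def ZerosD2 (V : ℝ → ℝ) (K c u0 u2 : ℝ) : Prop :=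
  0 < u0 ∧ u0 < u2 ∧ fTV V K c u0 = 0 ∧ fTV V K c u2 = 0 ∧
  ∀ u, 0 < u → fTV V K c u = 0 → u = u0 ∨ u = u2

/-- Condition (HE1). -/
def HE1 (u1 u2 : ℝ) (u w : ℝ → ℝ) : Prop :=
  Tendsto u atBot (nhds u1) ∧ Tendsto u atTop (nhds u2) ∧
  Tendsto w atBot (nhds 0) ∧ Tendsto w atTop (nhds 0) ∧ ∀ z, 0 < w z

/-- Condition (HE2). -/
def HE2 (u1 u2 : ℝ) (u w : ℝ → ℝ) : Prop :=
  Tendsto u atBot (nhds u2) ∧ Tendsto u atTop (nhds u1) ∧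
  Tendsto w atBot (nhds 0) ∧ Tendsto w atTop (nhds 0) ∧ ∀ z, w z < 0

/-- Condition (HO) with level `ub`. -/
def HO (ub : ℝ) (u w : ℝ → ℝ) : Prop :=
  Tendsto u atBot (nhds ub) ∧ Tendsto u atTop (nhds ub) ∧
  Tendsto w atBot (nhds 0) ∧ Tendsto w atTop (nhds 0) ∧
  ¬ (∀ z, u z = ub ∧ w z = 0)

/-- (TV) with parameter `μ` has a positive solution satisfying (HE1). -/
def HasHE1 (V V' κ : ℝ → ℝ) (τ K c μ u1 u2 : ℝ) : Prop :=
  ∃ u w : ℝ → ℝ, IsTVSol V V' κ τ K c μ u w ∧ (∀ z, 0 < u z) ∧ HE1 u1 u2 u w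

/-- (TV) with parameter `μ` has a positive solution satisfying (HE2). -/
def HasHE2 (V V' κ : ℝ → ℝ) (τ K c μ u1 u2 : ℝ) : Prop :=
  ∃ u w : ℝ → ℝ, IsTVSol V V' κ τ K c μ u w ∧ (∀ z, 0 < u z) ∧ HE2 u1 u2 u w

/-- (TV) with parameter `μ` has a positive solution satisfying (HO) with level `ub`. -/
def HasHO (V V' κ : ℝ → ℝ) (τ K c μ ub : ℝ) : Prop :=
  ∃ u w : ℝ → ℝ, IsTVSol V V' κ τ K c μ u w ∧ (∀ z, 0 < u z) ∧ HO ub u w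

/-- Condition (H): `∫₁^∞ dρ/(ρ³ κ(ρ)) = ∞`. -/
def CondH (κ : ℝ → ℝ) : Prop :=
  ¬ IntegrableOn (fun ρ => 1 / (ρ ^ 3 * κ ρ)) (Ioi 1)

/-- Condition (C). -/
def CondC (V' κ : ℝ → ℝ) (UM K₁ K : ℝ) : Prop :=
  (K₁ < K ∧ K < V' UM) ∨ (CondH κ ∧ V' 0 < K ∧ K ≤ K₁)

/-- Periodic solution. -/
def IsPeriodicSol (u w : ℝ → ℝ) : Prop :=
  ∃ Z, 0 < Z ∧ ∀ z, u (z + Z) = u z ∧ w (z + Z) = w z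

/-- Nonconstant pair of functions. -/
def Nonconst (u w : ℝ → ℝ) : Prop := ∃ z, u z ≠ u 0 ∨ w z ≠ w 0

/-- Discriminant of the Jacobian at an equilibrium `(u,0)`. -/
def discTV (V' κ : ℝ → ℝ) (τ K u μ : ℝ) : ℝ :=
  (g2TV κ τ u) ^ 2 * (hTV V' K μ u) ^ 2 + 4 * g1TV κ τ u * fdTV V' K u

/-- The eigenvalue `λ₊(u)`. -/
def lamP (V' κ : ℝ → ℝ) (τ K u μ : ℝ) : ℝ :=
  (g2TV κ τ u * hTV V' K μ u + Real.sqrt (discTV V' κ τ K u μ)) / 2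

/-- The eigenvalue `λ₋(u)`. -/
def lamM (V' κ : ℝ → ℝ) (τ K u μ : ℝ) : ℝ :=
  (g2TV κ τ u * hTV V' K μ u - Real.sqrt (discTV V' κ τ K u μ)) / 2

/-- `Z` is the minimal period of `(u,w)`. -/
def IsMinPeriod (u w : ℝ → ℝ) (Z : ℝ) : Prop :=
  0 < Z ∧ (∀ z, u (z + Z) = u z ∧ w (z + Z) = w z) ∧
  ∀ Z', 0 < Z' → (∀ z, u (z + Z') = u z ∧ w (z + Z') = w z) → Z ≤ Z'

/-!
At `u₀` the restoring force `G = g₁ f` decreases through zero, so in the phase plane the system is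
the damped oscillator `u'' = G u + B u * u'` with `B = g₂ h`. Its energy `w² / 2 - ∫ G` has a strict
local minimum at `(u₀, 0)` and changes along orbits at the rate `B w²`. If `B u₀ > 0` the energy
increases near the equilibrium, and an orbit that tends to the equilibrium at `+∞` has to reach it,
hence is constant by uniqueness; if `B u₀ < 0`, reverse time. If `B u₀ = 0`, nonconstant orbits turn
clockwise round the equilibrium with angular speed bounded away from zero. An orbit homoclinic to it
spirals out of it and back into it in the same sense, so its two ends cross. By uniqueness it is
then periodic, and a periodic orbit with a limit is constant.
-/

section Calculus

open scoped Topology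

theorem exists_eventually_hasDerivAt_of_eventually_continuousAt {g : ℝ → ℝ} {a : ℝ}
    (hg : ∀ᶠ x in 𝓝 a, ContinuousAt g x) : ∃ Φ : ℝ → ℝ, ∀ᶠ x in 𝓝 a, HasDerivAt Φ (g x) x := by
  obtain ⟨ε, hε, hball⟩ := Metric.eventually_nhds_iff_ball.1 hg
  have hcont : ContinuousOn g (Metric.ball a ε) := fun x hx => (hball x hx).continuousWithinAt
  refine ⟨fun x => ∫ y in a..x, g y, ?_⟩
  filter_upwards [Metric.ball_mem_nhds a hε] with x hx
  have hsub : uIcc a x ⊆ Metric.ball a ε :=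
    (convex_ball a ε).ordConnected.uIcc_subset (Metric.mem_ball_self hε) hx
  exact intervalIntegral.integral_hasDerivAt_right (hcont.mono hsub).intervalIntegrable
    (hcont.stronglyMeasurableAtFilter Metric.isOpen_ball x hx) (hball x hx)

theorem isLocalMax_of_hasDerivAt_hasDerivAt_neg {f f' : ℝ → ℝ} {x d : ℝ}
    (hf : ∀ᶠ y in 𝓝 x, HasDerivAt f (f' y) y) (hx : f' x = 0) (hf' : HasDerivAt f' d x)
    (hd : d < 0) : IsLocalMax f x := by
  have hderiv : deriv f =ᶠ[𝓝 x] f' := hf.mono fun y hy => hy.deriv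
  exact isLocalMax_of_deriv_deriv_neg (by rwa [hderiv.deriv_eq, hf'.deriv])
    (hderiv.eq_of_nhds.trans hx) hf.self_of_nhds.continuousAt

theorem min_lt_of_forall_hasDerivAt_eq_zero_imp_eq {g g' : ℝ → ℝ} {s : Set ℝ} {M a b c : ℝ}
    (hs : s.OrdConnected) (hg : ∀ x ∈ s, HasDerivAt g (g' x) x) (hM : M ∈ s) (hmax : IsMaxOn g s M)
    (hcrit : ∀ x ∈ s, g' x = 0 → x = M) (ha : a ∈ s) (hc : c ∈ s) (hab : a < b) (hbc : b < c) :
    min (g a) (g c) < g b := by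
  have hb : b ∈ s := hs.out ha hc ⟨hab.le, hbc.le⟩
  have hcont : ∀ {x y}, x ∈ s → y ∈ s → ContinuousOn g (Icc x y) := fun hx hy r hr =>
    (hg r (hs.out hx hy hr)).continuousAt.continuousWithinAt
  have hrolle : ∀ {x y}, x ∈ s → y ∈ s → x < y → g x = g y → M ∈ Ioo x y := fun hx hy hxy heq => by
    obtain ⟨z, hz, hz'⟩ := exists_hasDerivAt_eq_zero hxy (hcont hx hy) heq
      fun r hr => hg r (hs.out hx hy (Ioo_subset_Icc_self hr))
    exact hcrit z (hs.out hx hy (Ioo_subset_Icc_self hz)) hz' ▸ hz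
  by_contra! hle
  obtain ⟨hba, hbc'⟩ := le_min_iff.1 hle
  rcases le_total b M with hbM | hMb
  · obtain ⟨y, hy, hgy⟩ := intermediate_value_Icc hbM (hcont hb hM) ⟨hba, hmax ha⟩
    exact (hrolle ha (hs.out hb hM hy) (hab.trans_le hy.1) hgy.symm).2.not_ge hy.2
  · obtain ⟨y, hy, hgy⟩ := intermediate_value_Icc' hMb (hcont hM hb) ⟨hbc', hmax hc⟩
    exact (hrolle (hs.out hM hb hy) hc (hy.2.trans_lt hbc) hgy).1.not_ge hy.1

theorem exists_le_hasDerivAt_of_mul_sub_le {f f' : ℝ → ℝ} {p q k : ℝ} (hpq : p < q)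
    (hfc : ContinuousOn f (Icc p q)) (hf : ∀ x ∈ Ioo p q, HasDerivAt f (f' x) x)
    (hk : k * (q - p) ≤ f q - f p) : ∃ x ∈ Ioo p q, k ≤ f' x := by
  obtain ⟨x, hx, hslope⟩ := exists_hasDerivAt_eq_slope f f' hpq hfc hf
  exact ⟨x, hx, hslope ▸ (le_div_iff₀ (sub_pos.2 hpq)).2 hk⟩

theorem contDiffOn_one_of_hasDerivAt {f f' : ℝ → ℝ} {s : Set ℝ} (hs : IsOpen s)
    (hf : ∀ x ∈ s, HasDerivAt f (f' x) x) (hf' : ContinuousOn f' s) : ContDiffOn ℝ 1 f s :=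
  (contDiffOn_succ_iff_deriv_of_isOpen (n := 0) hs).2
    ⟨fun x hx => (hf x hx).differentiableAt.differentiableWithinAt, by simp,
      contDiffOn_zero.2 (hf'.congr fun x hx => (hf x hx).deriv)⟩

end Calculus

section AutonomousODE

open scoped Topology

variable {E : Type*} [NormedAddCommGroup E] [NormedSpace ℝ E] {v : E → E} {s : Set E}

theorem integralCurve_eq_of_contDiffOn (hs : IsOpen s) (hv : ContDiffOn ℝ 1 v s) {γ δ : ℝ → E}
    (hγ : IsIntegralCurve γ fun _ => v) (hδ : IsIntegralCurve δ fun _ => v)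
    (hγs : ∀ t, γ t ∈ s) {t₀ : ℝ} (h₀ : γ t₀ = δ t₀) : γ = δ := by
  have hclosed : IsClosed {t | γ t = δ t} := isClosed_eq hγ.continuous hδ.continuous
  have hopen : IsOpen {t | γ t = δ t} := by
    refine isOpen_iff_mem_nhds.2 fun t ht => ?_
    obtain ⟨_, U, hU, hlip⟩ :=
      (hv.contDiffAt (hs.mem_nhds (hγs t))).exists_lipschitzOnWith
    exact ODE_solution_unique_of_eventually (s := fun _ => U) (.of_forall fun _ => hlip)
      ((hγ.continuous.continuousAt.eventually_mem hU).mono fun r hr => ⟨hγ r, hr⟩)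
      ((hδ.continuous.continuousAt.eventually_mem (ht ▸ hU)).mono fun r hr => ⟨hδ r, hr⟩) ht
  have huniv := IsClopen.eq_univ ⟨hclosed, hopen⟩ ⟨t₀, h₀⟩
  exact funext fun t => huniv.ge (mem_univ t)

theorem eq_of_periodic_of_tendsto_atTop {X : Type*} [TopologicalSpace X] [T2Space X] {f : ℝ → X}
    {T : ℝ} {x : X} (hf : Function.Periodic f T) (hT : 0 < T) (hx : Tendsto f atTop (𝓝 x)) (t : ℝ) :
    f t = x := by
  have hseq : Tendsto (fun n : ℕ => t + n * T) atTop atTop :=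
    tendsto_atTop_add_const_left _ _ (tendsto_natCast_atTop_atTop.atTop_mul_const hT)
  exact tendsto_nhds_unique tendsto_const_nhds ((hx.comp hseq).congr fun n => hf.nat_mul n t)

theorem integralCurve_eq_limit_of_not_injective (hs : IsOpen s) (hv : ContDiffOn ℝ 1 v s)
    {γ : ℝ → E} (hγ : IsIntegralCurve γ fun _ => v) (hγs : ∀ t, γ t ∈ s)
    (hinj : ¬ Function.Injective γ) {p : E} (hp : Tendsto γ atTop (𝓝 p)) (t : ℝ) : γ t = p := by
  obtain ⟨t₁, t₂, hne, heq⟩ : ∃ t₁ t₂, t₁ ≠ t₂ ∧ γ t₁ = γ t₂ := by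
    simpa only [Function.not_injective_iff, and_comm] using hinj
  wlog hlt : t₁ < t₂ generalizing t₁ t₂
  · exact this t₂ t₁ hne.symm heq.symm (hne.symm.lt_of_le (not_lt.1 hlt))
  have hshift : γ ∘ (· + (t₂ - t₁)) = γ :=
    integralCurve_eq_of_contDiffOn hs hv (hγ.comp_add (t₂ - t₁)) hγ (fun _ => hγs _)
      (t₀ := t₁) (by simp [heq])
  exact eq_of_periodic_of_tendsto_atTop (congrFun hshift) (sub_pos.2 hlt) hp t

end AutonomousODE

section WindingCurve

open scoped Topology

theorem exists_log_of_continuous_deriv {ζ ζ' : ℝ → ℂ} (hζ : ∀ t, HasDerivAt ζ (ζ' t) t)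
    (hζ' : Continuous ζ') (hne : ∀ t, ζ t ≠ 0) :
    ∃ L : ℝ → ℂ, (∀ t, HasDerivAt L (ζ' t / ζ t) t) ∧ ∀ t, Complex.exp (L t) = ζ t := by
  have hζc : Continuous ζ := continuous_iff_continuousAt.2 fun t => (hζ t).continuousAt
  let L : ℝ → ℂ := fun t => Complex.log (ζ 0) + ∫ r in (0 : ℝ)..t, ζ' r / ζ r
  have hL : ∀ t, HasDerivAt L (ζ' t / ζ t) t := fun t =>
    ((hζ'.div hζc hne).integral_hasStrictDerivAt 0 t).hasDerivAt.const_add _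
  have hquot : ∀ t, HasDerivAt (fun r => Complex.exp (L r) / ζ r) 0 t := fun t => by
    refine ((hL t).cexp.div (hζ t) (hne t)).congr_deriv ?_
    have := hne t
    field_simp
    ring
  have hL₀ : Complex.exp (L 0) = ζ 0 := by simp [L, Complex.exp_log (hne 0)]
  refine ⟨L, hL, fun t => ?_⟩
  have hconst : Complex.exp (L t) / ζ t = Complex.exp (L 0) / ζ 0 :=
    is_const_of_deriv_eq_zero (fun r => (hquot r).differentiableAt) (fun r => (hquot r).deriv) t 0
  rwa [hL₀, div_self (hne 0), div_eq_one_iff_eq (hne t)] at hconst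

theorem exists_continuous_rightInverse_of_strictAntiOn_Iic {θ : ℝ → ℝ} {a : ℝ}
    (hθ : Continuous θ) (hanti : StrictAntiOn θ (Iic a)) (hbot : Tendsto θ atBot atTop) :
    ∃ σ : ℝ → ℝ, Continuous σ ∧ Tendsto σ atTop atBot ∧
      ∀ y, θ a ≤ y → σ y ≤ a ∧ θ (σ y) = y := by
  -- `-θ` on `Iic a`, continued with slope `1`, is an order isomorphism of the whole line.
  let m : ℝ → ℝ := fun t => (max t a - a) - θ (min t a)
  have hm_of_le : ∀ t ≤ a, m t = -θ t := fun t ht => by simp [m, ht]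
  have hm_of_ge : ∀ t, a ≤ t → m t = t - a - θ a := fun t ht => by simp [m, ht]
  have hm_mono : StrictMono m :=
    StrictMonoOn.Iic_union_Ici
      (fun x hx y hy hxy => by
        rw [hm_of_le x hx, hm_of_le y hy]; exact neg_lt_neg (hanti hx hy hxy))
      (fun x hx y hy hxy => by rw [hm_of_ge x hx, hm_of_ge y hy]; linarith)
  have hm_top : Tendsto m atTop atTop := by
    refine (tendsto_atTop_add_const_right _ (-a - θ a) tendsto_id).congr' ?_
    filter_upwards [eventually_ge_atTop a] with t ht
    rw [hm_of_ge t ht, id]; ring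
  have hm_bot : Tendsto m atBot atBot := by
    refine (tendsto_neg_atTop_atBot.comp hbot).congr' ?_
    filter_upwards [eventually_le_atBot a] with t ht using (hm_of_le t ht).symm
  let e := hm_mono.orderIsoOfSurjective m ((by fun_prop : Continuous m).surjective hm_top hm_bot)
  refine ⟨fun y => e.symm (-y), e.symm.continuous.comp continuous_neg,
    e.symm.tendsto_atBot.comp tendsto_neg_atTop_atBot, fun y hy => ?_⟩
  have hle : e.symm (-y) ≤ a := by
    rw [e.symm_apply_le]
    exact (neg_le_neg hy).trans_eq (hm_of_le a le_rfl).symm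
  exact ⟨hle, neg_injective ((hm_of_le _ hle).symm.trans (e.apply_symm_apply (-y)))⟩

theorem exists_lt_eq_and_eq_add_nat_mul {θ ρ : ℝ → ℝ} {a b p : ℝ} (hp : 0 < p) (hab : a < b)
    (hθ : Continuous θ) (hρ : Continuous ρ)
    (hθa : StrictAntiOn θ (Iic a)) (hθb : AntitoneOn θ (Ici b))
    (hθbot : Tendsto θ atBot atTop) (hθtop : Tendsto θ atTop atBot)
    (hρbot : Tendsto ρ atBot atBot) (hρtop : Tendsto ρ atTop atBot) :
    ∃ s t, s < t ∧ ρ s = ρ t ∧ ∃ n : ℕ, θ s = θ t + n * p := by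
  obtain ⟨σ, hσ, hσ_lim, hσ_inv⟩ :=
    exists_continuous_rightInverse_of_strictAntiOn_Iic hθ hθa hθbot
  obtain ⟨b', hb'⟩ := eventually_atTop.1 ((hρtop.eventually_lt_atBot (ρ a)).and
    (eventually_ge_atTop b))
  have hnp : Tendsto (fun n : ℕ => (n : ℝ) * p) atTop atTop :=
    tendsto_natCast_atTop_atTop.atTop_mul_const hp
  obtain ⟨n, hn_start, hn_end⟩ :
      ∃ n : ℕ, ρ (σ (θ b + n * p)) < ρ b ∧ θ a - θ b' ≤ n * p :=
    (((hρbot.comp (hσ_lim.comp (tendsto_atTop_add_const_left _ (θ b) hnp))).eventually_lt_atBot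
      (ρ b)).and (hnp.eventually_ge_atTop (θ a - θ b'))).exists
  obtain ⟨e, hb'e, he⟩ : ∃ e ≥ b', θ e = θ a - n * p := by
    obtain ⟨y, hy, hb'y⟩ := ((hθtop.eventually_le_atBot (θ a - n * p)).and
      (eventually_ge_atTop b')).exists
    obtain ⟨e, he, hθe⟩ := intermediate_value_Icc' hb'y hθ.continuousOn
      (show θ a - n * p ∈ Icc (θ y) (θ b') from ⟨hy, by linarith⟩)
    exact ⟨e, he.1, hθe⟩
  obtain ⟨hρe, hbe⟩ := hb' e hb'e
  -- At the outgoing time `t`, the incoming branch has the angle of the outgoing one, `n` turns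
  -- earlier, at time `φ t`. It is nearer to the origin when `t = b` and farther away when `t = e`.
  let φ : ℝ → ℝ := fun t => σ (θ t + n * p)
  have hφ : ∀ t ∈ Icc b e, φ t ≤ a ∧ θ (φ t) = θ t + n * p := fun t ht =>
    hσ_inv _ (by linarith [hθb ht.1 hbe ht.2])
  have hφe : φ e = a := by
    obtain ⟨hle, heq⟩ := hφ e ⟨hbe, le_rfl⟩
    exact hθa.injOn hle self_mem_Iic (by linarith)
  obtain ⟨t, ht, hρt⟩ : ∃ t ∈ Icc b e, ρ (φ t) = ρ t :=
    isPreconnected_Icc.intermediate_value₂ (left_mem_Icc.2 hbe) (right_mem_Icc.2 hbe)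
      (hρ.comp (hσ.comp (by fun_prop))).continuousOn hρ.continuousOn hn_start.le
      (by rw [hφe]; exact hρe.le)
  obtain ⟨hle, heq⟩ := hφ t ht
  exact ⟨φ t, t, hle.trans_lt (hab.trans_le ht.1), hρt, n, heq⟩

theorem exists_strictAntiOn_Ici_of_hasDerivAt_le {θ θ' : ℝ → ℝ} {c : ℝ} (hc : 0 < c)
    (hθ : ∀ t, HasDerivAt θ (θ' t) t) (hle : ∀ᶠ t in atTop, θ' t ≤ -c) :
    Tendsto θ atTop atBot ∧ ∃ b, StrictAntiOn θ (Ici b) := by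
  obtain ⟨b, hb⟩ := eventually_atTop.1 hle
  have hdrop : ∀ x ∈ Ici b, ∀ y ∈ Ici b, x ≤ y → θ y - θ x ≤ -c * (y - x) := fun x hx y hy =>
    (convex_Ici b).image_sub_le_mul_sub_of_deriv_le
      (fun t _ => (hθ t).continuousAt.continuousWithinAt)
      (fun t _ => (hθ t).differentiableAt.differentiableWithinAt)
      (fun t ht => (hθ t).deriv.trans_le (hb t (interior_subset ht))) x hx y hy
  refine ⟨?_, b, fun x hx y hy hxy => by nlinarith [hdrop x hx y hy hxy.le]⟩
  have hline : Tendsto (fun t => (θ b + c * b) + -c * t) atTop atBot :=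
    tendsto_atBot_add_const_left _ _ (tendsto_id.const_mul_atTop_of_neg (neg_lt_zero.2 hc))
  refine tendsto_atBot_mono' _ ?_ hline
  filter_upwards [eventually_ge_atTop b] with t ht
  linarith [hdrop b self_mem_Ici t ht ht]

theorem exists_strictAntiOn_Iic_of_hasDerivAt_le {θ θ' : ℝ → ℝ} {c : ℝ} (hc : 0 < c)
    (hθ : ∀ t, HasDerivAt θ (θ' t) t) (hle : ∀ᶠ t in atBot, θ' t ≤ -c) :
    Tendsto θ atBot atTop ∧ ∃ a, StrictAntiOn θ (Iic a) := by
  have hreflect : ∀ t, HasDerivAt (fun r => -θ (-r)) (θ' (-t)) t := fun t =>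
    ((hθ (-t)).comp t (hasDerivAt_neg t)).neg.congr_deriv (by ring)
  obtain ⟨hlim, b, hb⟩ := exists_strictAntiOn_Ici_of_hasDerivAt_le hc hreflect
    (tendsto_neg_atTop_atBot.eventually hle)
  refine ⟨?_, -b, fun x hx y hy hxy => ?_⟩
  · simpa [Function.comp_def] using
      tendsto_neg_atBot_atTop.comp (hlim.comp tendsto_neg_atBot_atTop)
  · simpa using hb (mem_Ici.2 (le_neg_of_le_neg hy)) (mem_Ici.2 (le_neg_of_le_neg hx))
      (neg_lt_neg hxy)

theorem not_injective_of_winding {ζ ζ' : ℝ → ℂ} {c : ℝ} (hζ : ∀ t, HasDerivAt ζ (ζ' t) t)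
    (hζ' : Continuous ζ') (hne : ∀ t, ζ t ≠ 0)
    (hbot : Tendsto ζ atBot (𝓝 0)) (htop : Tendsto ζ atTop (𝓝 0)) (hc : 0 < c)
    (hwbot : ∀ᶠ t in atBot, (ζ' t / ζ t).im ≤ -c) (hwtop : ∀ᶠ t in atTop, (ζ' t / ζ t).im ≤ -c) :
    ¬ Function.Injective ζ := by
  obtain ⟨L, hL, hexp⟩ := exists_log_of_continuous_deriv hζ hζ' hne
  have hLc : Continuous L := continuous_iff_continuousAt.2 fun t => (hL t).continuousAt
  have hθ : ∀ t, HasDerivAt (fun r => (L r).im) (ζ' t / ζ t).im t := fun t =>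
    Complex.imCLM.hasFDerivAt.comp_hasDerivAt t (hL t)
  have hρ : ∀ {l : Filter ℝ}, Tendsto ζ l (𝓝 0) → Tendsto (fun t => (L t).re) l atBot := by
    intro l hl
    have hnorm : Tendsto (fun t => ‖ζ t‖) l (𝓝[≠] 0) :=
      tendsto_nhdsWithin_iff.2 ⟨by simpa using hl.norm, .of_forall fun t => by simp [hne t]⟩
    refine (Real.tendsto_log_nhdsNE_zero.comp hnorm).congr fun t => ?_
    rw [Function.comp_apply, ← hexp t, Complex.norm_exp, Real.log_exp]
  obtain ⟨hθbot, a, ha⟩ := exists_strictAntiOn_Iic_of_hasDerivAt_le hc hθ hwbot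
  obtain ⟨hθtop, b, hb⟩ := exists_strictAntiOn_Ici_of_hasDerivAt_le hc hθ hwtop
  obtain ⟨s, t, hst, hre, n, him⟩ := exists_lt_eq_and_eq_add_nat_mul Real.two_pi_pos
    ((lt_add_one a).trans_le (le_max_right b (a + 1)))
    (Complex.continuous_im.comp hLc) (Complex.continuous_re.comp hLc)
    ha (hb.antitoneOn.mono (Ici_subset_Ici.2 (le_max_left b (a + 1))))
    hθbot hθtop (hρ hbot) (hρ htop)
  refine fun hinj => hst.ne (hinj ?_)
  rw [← hexp s, ← hexp t, Complex.exp_eq_exp_iff_exists_int]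
  exact ⟨n, Complex.ext (by simpa using hre) (by simpa using him)⟩

end WindingCurve

section Lienard

open scoped Topology ComplexConjugate

/-- The phase-plane velocity field `(u, w) ↦ (w, G u + B u * w)` of the Liénard equation
`u'' = G u + B u * u'`. The phase plane is `ℂ`, with `u` on the real and `w` on the imaginary axis,
so that polar angles are imaginary parts of logarithms. -/
def lienardField (G B : ℝ → ℝ) (p : ℂ) : ℂ := ⟨p.im, G p.re + B p.re * p.im⟩

variable {G B : ℝ → ℝ} {U : Set ℝ} {x₀ d : ℝ} {γ : ℝ → ℂ}

theorem contDiffOn_lienardField {n : WithTop ℕ∞} (hG : ContDiffOn ℝ n G U)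
    (hB : ContDiffOn ℝ n B U) : ContDiffOn ℝ n (lienardField G B) {p | p.re ∈ U} := by
  have hre : ContDiffOn ℝ n (fun p : ℂ => p.re) {p | p.re ∈ U} := Complex.reCLM.contDiff.contDiffOn
  have him : ContDiffOn ℝ n (fun p : ℂ => p.im) {p | p.re ∈ U} := Complex.imCLM.contDiff.contDiffOn
  have hmaps : MapsTo (fun p : ℂ => p.re) {p | p.re ∈ U} U := fun _ hp => hp
  exact Complex.equivRealProdCLM.symm.contDiff.comp_contDiffOn
    (him.prodMk ((hG.comp hre hmaps).add ((hB.comp hre hmaps).mul him)))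

theorem isIntegralCurve_lienardField_conj_neg (hγ : IsIntegralCurve γ fun _ => lienardField G B) :
    IsIntegralCurve (fun t => conj (γ (-t))) fun _ => lienardField G (-B) := fun t => by
  have hcomp : HasDerivAt (fun r => γ (-r)) (-lienardField G B (γ (-t))) t :=
    ((hγ (-t)).scomp t (hasDerivAt_neg t)).congr_deriv (by simp)
  refine (Complex.conjCLE.hasFDerivAt.comp_hasDerivAt t hcomp).congr_deriv ?_
  apply Complex.ext <;> simp [lienardField]

theorem hasDerivAt_re_of_isIntegralCurve_lienardField
    (hγ : IsIntegralCurve γ fun _ => lienardField G B) (t : ℝ) :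
    HasDerivAt (fun r => (γ r).re) (γ t).im t :=
  Complex.reCLM.hasFDerivAt.comp_hasDerivAt t (hγ t)

theorem hasDerivAt_im_of_isIntegralCurve_lienardField
    (hγ : IsIntegralCurve γ fun _ => lienardField G B) (t : ℝ) :
    HasDerivAt (fun r => (γ r).im) (G (γ t).re + B (γ t).re * (γ t).im) t :=
  Complex.imCLM.hasFDerivAt.comp_hasDerivAt t (hγ t)

theorem eventually_im_eq_zero_of_isIntegralCurve_lienardField (hGc : ∀ᶠ x in 𝓝 x₀, ContinuousAt G x)
    (hG₀ : G x₀ = 0) (hG : HasDerivAt G d x₀) (hd : d < 0) (hB : ContinuousAt B x₀)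
    (hB₀ : 0 < B x₀) (hγ : IsIntegralCurve γ fun _ => lienardField G B)
    (htop : Tendsto γ atTop (𝓝 x₀)) : ∀ᶠ t in atTop, (γ t).im = 0 := by
  obtain ⟨Φ, hΦ⟩ := exists_eventually_hasDerivAt_of_eventually_continuousAt hGc
  have hmax := isLocalMax_of_hasDerivAt_hasDerivAt_neg hΦ hG₀ hG hd
  have hu := hasDerivAt_re_of_isIntegralCurve_lienardField hγ
  have hw := hasDerivAt_im_of_isIntegralCurve_lienardField hγ
  have hre : Tendsto (fun t => (γ t).re) atTop (𝓝 x₀) :=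
    (Complex.continuous_re.tendsto (x₀ : ℂ)).comp htop
  have him : Tendsto (fun t => (γ t).im) atTop (𝓝 0) :=
    (Complex.continuous_im.tendsto (x₀ : ℂ)).comp htop
  let energy : ℝ → ℝ := fun t => (γ t).im ^ 2 / 2 - Φ (γ t).re
  have henergy_lim : Tendsto energy atTop (𝓝 (-Φ x₀)) := by
    simpa using ((him.pow 2).div_const 2).sub (hΦ.self_of_nhds.continuousAt.tendsto.comp hre)
  obtain ⟨T, hT⟩ := eventually_atTop.1 ((hre.eventually hΦ).and
    ((hre.eventually hmax).and (hre.eventually (hB.eventually_const_lt hB₀))))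
  have henergy : ∀ t ∈ Ici T, HasDerivAt energy (B (γ t).re * (γ t).im ^ 2) t := fun t ht =>
    ((((hw t).pow 2).div_const 2).sub ((hT t ht).1.comp t (hu t))).congr_deriv
      (by norm_num; ring)
  have henergy_mono : MonotoneOn energy (Ici T) := by
    refine monotoneOn_of_deriv_nonneg (convex_Ici T)
      (fun t ht => (henergy t ht).continuousAt.continuousWithinAt)
      (fun t ht => (henergy t (interior_subset ht)).differentiableAt.differentiableWithinAt)
      fun t ht => ?_
    rw [(henergy t (interior_subset ht)).deriv]
    exact mul_nonneg (hT t (interior_subset ht)).2.2.le (sq_nonneg _)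
  have henergy_le : ∀ t ∈ Ici T, energy t ≤ -Φ x₀ := fun t ht => ge_of_tendsto henergy_lim <| by
    filter_upwards [eventually_ge_atTop t] with r hr using henergy_mono ht (ht.trans hr) hr
  filter_upwards [eventually_ge_atTop T] with t ht
  have hle : (γ t).im ^ 2 / 2 - Φ (γ t).re ≤ -Φ x₀ := henergy_le t ht
  have hΦle : Φ (γ t).re ≤ Φ x₀ := (hT t ht).2.1
  exact pow_eq_zero_iff two_ne_zero |>.1 (by linarith [sq_nonneg (γ t).im])

theorem exists_eq_of_isIntegralCurve_lienardField_of_pos (hGc : ∀ᶠ x in 𝓝 x₀, ContinuousAt G x)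
    (hG₀ : G x₀ = 0) (hG : HasDerivAt G d x₀) (hd : d < 0) (hB : ContinuousAt B x₀)
    (hB₀ : 0 < B x₀) (hγ : IsIntegralCurve γ fun _ => lienardField G B)
    (htop : Tendsto γ atTop (𝓝 x₀)) : ∃ t, γ t = x₀ := by
  obtain ⟨T, hT⟩ := eventually_atTop.1
    (eventually_im_eq_zero_of_isIntegralCurve_lienardField hGc hG₀ hG hd hB hB₀ hγ htop)
  have hre : Tendsto (fun t => (γ t).re) atTop (𝓝 x₀) :=
    (Complex.continuous_re.tendsto (x₀ : ℂ)).comp htop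
  have hisol : ∀ᶠ x in 𝓝 x₀, G x = 0 → x = x₀ := by
    filter_upwards [eventually_nhdsWithin_iff.1 (hG.eventually_ne hd.ne)] with x hx hGx
    exact by_contra fun hne => hx hne hGx
  obtain ⟨t, ht, hTt⟩ := ((hre.eventually hisol).and (eventually_gt_atTop T)).exists
  have him : (γ t).im = 0 := hT t hTt.le
  have hw : HasDerivAt (fun r => (γ r).im) 0 t :=
    (hasDerivAt_const t (0 : ℝ)).congr_of_eventuallyEq
      ((eventually_ge_nhds hTt).mono hT)
  have hGt : G (γ t).re = 0 := by
    simpa [him] using (hasDerivAt_im_of_isIntegralCurve_lienardField hγ t).unique hw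
  exact ⟨t, Complex.ext (ht hGt) him⟩

theorem exists_im_lienardField_div_le (hG₀ : G x₀ = 0) (hG : HasDerivAt G d x₀) (hd : d < 0)
    (hB : ContinuousAt B x₀) (hB₀ : B x₀ = 0) :
    ∃ c > 0, ∀ᶠ p : ℂ in 𝓝[≠] (x₀ : ℂ), (lienardField G B p / (p - x₀)).im ≤ -c := by
  obtain ⟨c, hc, hcd, hc1⟩ : ∃ c > 0, 3 * c ≤ -d ∧ 3 * c ≤ 1 :=
    ⟨min (-d) 1 / 3, by simp [hd], by linarith [min_le_left (-d) 1],
      by linarith [min_le_right (-d) 1]⟩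
  have hre : Tendsto Complex.re (𝓝[≠] (x₀ : ℂ)) (𝓝 x₀) :=
    (Complex.continuous_re.tendsto (x₀ : ℂ)).mono_left nhdsWithin_le_nhds
  refine ⟨c, hc, ?_⟩
  filter_upwards [hre.eventually (hG.isLittleO.bound hc),
    hre.eventually (hB.norm.eventually_lt_const (by simpa [hB₀] using hc)),
    self_mem_nhdsWithin] with p hGp hBp hp
  have hpos : 0 < Complex.normSq (p - x₀) := Complex.normSq_pos.2 (sub_ne_zero.2 hp)
  simp only [Complex.div_im, ← sub_div]
  rw [div_le_iff₀ hpos]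
  simp only [lienardField, Complex.normSq_apply, Complex.sub_re, Complex.sub_im, Complex.ofReal_re,
    Complex.ofReal_im, sub_zero]
  rw [hG₀, sub_zero, smul_eq_mul, Real.norm_eq_abs, Real.norm_eq_abs] at hGp
  rw [Real.norm_eq_abs] at hBp
  generalize p.re - x₀ = x at hGp ⊢
  have hrestoring : (G p.re - x * d) * x ≤ c * x ^ 2 :=
    calc (G p.re - x * d) * x ≤ |G p.re - x * d| * |x| := by
          rw [← abs_mul]; exact le_abs_self _
      _ ≤ c * |x| * |x| := by gcongr
      _ = c * x ^ 2 := by rw [mul_assoc, abs_mul_abs_self, sq]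
  have hdamping : B p.re * (p.im * x) ≤ c * ((p.im ^ 2 + x ^ 2) / 2) :=
    calc B p.re * (p.im * x) ≤ |B p.re| * |p.im * x| := by rw [← abs_mul]; exact le_abs_self _
      _ ≤ c * ((p.im ^ 2 + x ^ 2) / 2) := by
          gcongr
          exact abs_le.2 ⟨by linarith [sq_nonneg (p.im + x)], by linarith [sq_nonneg (p.im - x)]⟩
  nlinarith [sq_nonneg x, sq_nonneg p.im]

theorem exists_eq_of_isIntegralCurve_lienardField_of_eq_zero (hU : IsOpen U)
    (hGU : ContDiffOn ℝ 1 G U) (hBU : ContDiffOn ℝ 1 B U) (hx₀ : x₀ ∈ U) (hG₀ : G x₀ = 0)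
    (hG : HasDerivAt G d x₀) (hd : d < 0) (hB₀ : B x₀ = 0)
    (hγ : IsIntegralCurve γ fun _ => lienardField G B)
    (hγU : ∀ t, (γ t).re ∈ U) (hbot : Tendsto γ atBot (𝓝 x₀)) (htop : Tendsto γ atTop (𝓝 x₀)) :
    ∃ t, γ t = x₀ := by
  by_contra! hne
  have hUre : IsOpen {p : ℂ | p.re ∈ U} := hU.preimage Complex.continuous_re
  have hv := contDiffOn_lienardField hGU hBU
  have hBc : ContinuousAt B x₀ := hBU.continuousOn.continuousAt (hU.mem_nhds hx₀)
  obtain ⟨c, hc, hspin⟩ := exists_im_lienardField_div_le hG₀ hG hd hBc hB₀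
  have hwind : ∀ {l : Filter ℝ}, Tendsto γ l (𝓝 x₀) →
      ∀ᶠ t in l, (lienardField G B (γ t) / (γ t - x₀)).im ≤ -c := fun hl =>
    (tendsto_nhdsWithin_iff.2 ⟨hl, .of_forall hne⟩).eventually hspin
  have hζ : ∀ {l : Filter ℝ}, Tendsto γ l (𝓝 x₀) → Tendsto (fun t => γ t - x₀) l (𝓝 0) :=
    fun hl => by simpa using hl.sub_const (x₀ : ℂ)
  have hinj := not_injective_of_winding (fun t => (hγ t).sub_const (x₀ : ℂ))
    (hv.continuousOn.comp_continuous hγ.continuous hγU) (fun t => sub_ne_zero.2 (hne t))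
    (hζ hbot) (hζ htop) hc (hwind hbot) (hwind htop)
  have hinj' : ¬ Function.Injective γ := fun h => hinj ((sub_left_injective).comp h)
  exact hne 0 (integralCurve_eq_limit_of_not_injective hUre hv hγ hγU hinj' htop 0)

theorem isIntegralCurve_lienardField_eq_of_tendsto (hU : IsOpen U) (hGU : ContDiffOn ℝ 1 G U)
    (hBU : ContDiffOn ℝ 1 B U) (hx₀ : x₀ ∈ U) (hG₀ : G x₀ = 0) (hG : HasDerivAt G d x₀)
    (hd : d < 0) (hγ : IsIntegralCurve γ fun _ => lienardField G B)
    (hγU : ∀ t, (γ t).re ∈ U) (hbot : Tendsto γ atBot (𝓝 x₀)) (htop : Tendsto γ atTop (𝓝 x₀))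
    (t : ℝ) : γ t = x₀ := by
  have hUre : IsOpen {p : ℂ | p.re ∈ U} := hU.preimage Complex.continuous_re
  have hGc : ∀ᶠ x in 𝓝 x₀, ContinuousAt G x :=
    (hU.eventually_mem hx₀).mono fun x hx => hGU.continuousOn.continuousAt (hU.mem_nhds hx)
  have hBc : ContinuousAt B x₀ := hBU.continuousOn.continuousAt (hU.mem_nhds hx₀)
  obtain ⟨t₀, ht₀⟩ : ∃ t, γ t = x₀ := by
    rcases lt_trichotomy (B x₀) 0 with hneg | hzero | hpos
    · have hrev : Tendsto (fun t => conj (γ (-t))) atTop (𝓝 x₀) := by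
        simpa [Function.comp_def] using
          (Complex.continuous_conj.tendsto (x₀ : ℂ)).comp (hbot.comp tendsto_neg_atTop_atBot)
      obtain ⟨t, ht⟩ := exists_eq_of_isIntegralCurve_lienardField_of_pos hGc hG₀ hG hd hBc.neg
        (neg_pos.2 hneg) (isIntegralCurve_lienardField_conj_neg hγ) hrev
      exact ⟨-t, by simpa using congrArg conj ht⟩
    · exact exists_eq_of_isIntegralCurve_lienardField_of_eq_zero hU hGU hBU hx₀ hG₀ hG hd hzero
        hγ hγU hbot htop
    · exact exists_eq_of_isIntegralCurve_lienardField_of_pos hGc hG₀ hG hd hBc hpos hγ htop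
  have hequil : IsIntegralCurve (fun _ => (x₀ : ℂ)) fun _ => lienardField G B := fun r =>
    (hasDerivAt_const r (x₀ : ℂ)).congr_deriv (by apply Complex.ext <;> simp [lienardField, hG₀])
  exact congrFun (integralCurve_eq_of_contDiffOn hUre (contDiffOn_lienardField hGU hBU)
    hγ hequil hγU ht₀) t

end Lienard

section Coefficients

variable {V V' κ : ℝ → ℝ} {τ K c μ : ℝ}

theorem g1TV_pos (hκ : A2 κ) (hτ : 0 < τ) {x : ℝ} (hx : 0 < x) : 0 < g1TV κ τ x :=
  one_div_pos.2 (mul_pos hτ (hκ.2 _ (one_div_pos.2 hx)))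

theorem contDiffOn_comp_one_div {n : WithTop ℕ∞} (hκ : ContDiffOn ℝ n κ (Ioi 0)) :
    ContDiffOn ℝ n (fun x => κ (1 / x)) (Ioi 0) :=
  hκ.comp (contDiffOn_const.div contDiffOn_id fun _ hx => hx.ne') fun _ hx =>
    mem_Ioi.2 (one_div_pos.2 hx)

theorem contDiffOn_g1TV (hκ : A2 κ) (hτ : 0 < τ) : ContDiffOn ℝ 1 (g1TV κ τ) (Ioi 0) :=
  contDiffOn_const.div (contDiffOn_const.mul (contDiffOn_comp_one_div hκ.1)) fun _ hx =>
    (mul_pos hτ (hκ.2 _ (one_div_pos.2 hx))).ne'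

theorem contDiffOn_g2TV (hκ : A2 κ) (hτ : 0 < τ) : ContDiffOn ℝ 1 (g2TV κ τ) (Ioi 0) :=
  contDiffOn_id.div (contDiffOn_const.mul (contDiffOn_comp_one_div hκ.1)) fun _ hx =>
    (mul_pos (mul_pos two_pos hτ) (hκ.2 _ (one_div_pos.2 hx))).ne'

theorem hasDerivAt_fTV {x : ℝ} (hV : HasDerivAt V (V' x) x) :
    HasDerivAt (fTV V K c) (fdTV V' K x) x :=
  ((((hasDerivAt_id x).const_mul K).sub hV).sub_const c |>.div_const K).congr_deriv
    (by rw [fdTV, mul_one])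

theorem contDiffOn_fdTV {n : WithTop ℕ∞} {s : Set ℝ} (hV' : ContDiffOn ℝ n V' s) :
    ContDiffOn ℝ n (fdTV V' K) s :=
  (contDiffOn_const.sub hV').div_const K

theorem fTV_eq_zero_iff (hK : K ≠ 0) {x : ℝ} : fTV V K c x = 0 ↔ V x = K * x - c := by
  rw [fTV, div_eq_zero_iff, or_iff_left hK]
  constructor <;> intro h <;> linarith

theorem fdTV_neg (hK : 0 < K) {x : ℝ} (hx : K < V' x) : fdTV V' K x < 0 :=
  div_neg_of_neg_of_pos (sub_neg.2 hx) hK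

theorem isIntegralCurve_lienardField_of_isTVSol {u w : ℝ → ℝ}
    (h : IsTVSol V V' κ τ K c μ u w) :
    IsIntegralCurve (fun z => (⟨u z, w z⟩ : ℂ)) fun _ =>
      lienardField (fun x => g1TV κ τ x * fTV V K c x) (fun x => g2TV κ τ x * hTV V' K μ x) :=
  fun z => Complex.equivRealProdCLM.symm.hasFDerivAt.comp_hasDerivAt z ((h.1 z).prodMk (h.2 z))

end Coefficients

section Equilibrium

open scoped Topology

variable {V V' V'' : ℝ → ℝ} {UM K c : ℝ}

theorem A1.hasDerivAt (h : A1 V V' V'' UM) : ∀ x ∈ Ioi 0, HasDerivAt V (V' x) x := fun x hx =>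
  (h.1 x (mem_Ici_of_Ioi hx)).hasDerivAt (Ici_mem_nhds hx)

theorem A1.contDiffOn_deriv (h : A1 V V' V'' UM) : ContDiffOn ℝ 1 V' (Ioi 0) :=
  contDiffOn_one_of_hasDerivAt isOpen_Ioi h.2.2.1 h.2.2.2.1

theorem A1.deriv_zero_nonneg (h : A1 V V' V'' UM) : 0 ≤ V' 0 := by
  have hlim : Tendsto V' (𝓝[>] 0) (𝓝 (V' 0)) :=
    (h.2.1 0 self_mem_Ici).mono_left (nhdsWithin_mono _ Ioi_subset_Ici_self)
  exact ge_of_tendsto hlim (eventually_mem_nhdsWithin.mono fun x hx => (h.2.2.2.2.1 x hx).le)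

theorem A1.lt_deriv_of_mul_sub_le (h : A1 V V' V'' UM) {p x q : ℝ} (hp : 0 ≤ p) (hpx : p < x)
    (hxq : x < q) (hleft : K * (x - p) ≤ V x - V p) (hright : K * (q - x) ≤ V q - V x) :
    K < V' x := by
  have hslope : ∀ {a b}, 0 ≤ a → a < b → K * (b - a) ≤ V b - V a → ∃ y ∈ Ioo a b, K ≤ V' y :=
    fun ha hab => exists_le_hasDerivAt_of_mul_sub_le hab
      (fun r hr => (h.1 r (ha.trans hr.1)).continuousWithinAt.mono fun t ht => ha.trans ht.1)
      fun r hr => h.hasDerivAt r (ha.trans_lt hr.1)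
  obtain ⟨y, hy, hKy⟩ := hslope hp hpx hleft
  obtain ⟨z, hz, hKz⟩ := hslope (hp.trans hpx.le) hxq hright
  obtain ⟨-, -, hV'', -, -, -, -, hUM, hmax, hcrit⟩ := h
  exact (le_min hKy hKz).trans_lt <| min_lt_of_forall_hasDerivAt_eq_zero_imp_eq ordConnected_Ioi
    hV'' hUM hmax (fun r hr => (hcrit r hr).1) (hp.trans_lt hy.1)
    ((hp.trans_lt hpx).trans hz.1) hy.2 hz.1

theorem A1.fdTV_neg_of_mem_D1 {uMx umx : ℝ → ℝ} {u1 u0 u2 : ℝ} (h : A1 V V' V'' UM)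
    (hKc : (K, c) ∈ D1 V V' UM uMx umx) (hz : ZerosD1 V K c u1 u0 u2) : fdTV V' K u0 < 0 := by
  obtain ⟨hu1, h10, h02, hf1, hf0, hf2, -⟩ := hz
  have hK : 0 < K := h.deriv_zero_nonneg.trans_lt hKc.1
  rw [fTV_eq_zero_iff hK.ne'] at hf1 hf0 hf2
  exact fdTV_neg hK (h.lt_deriv_of_mul_sub_le hu1.le h10 h02 (by linarith) (by linarith))

theorem A1.fdTV_neg_of_mem_D2 {umx : ℝ → ℝ} {K₁ u0 u2 : ℝ} (h : A1 V V' V'' UM)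
    (hKc : (K, c) ∈ D2 V V' umx K₁) (hz : ZerosD2 V K c u0 u2) : fdTV V' K u0 < 0 := by
  obtain ⟨hu0, h02, hf0, hf2, -⟩ := hz
  obtain ⟨hK, hc⟩ : 0 < K ∧ c ≤ -V 0 := by
    rcases hKc with ⟨hK, -, hc⟩ | ⟨hK, -, -, hc⟩
    · exact ⟨h.deriv_zero_nonneg.trans_lt hK, hc.le⟩
    · exact ⟨hK, hc.le⟩
  rw [fTV_eq_zero_iff hK.ne'] at hf0 hf2
  exact fdTV_neg hK (h.lt_deriv_of_mul_sub_le le_rfl hu0 h02 (by linarith) (by linarith))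

theorem A1.equilibrium_of_mem_D1_or_mem_D2 {uMx umx : ℝ → ℝ} {K₁ u0 : ℝ} (h : A1 V V' V'' UM)
    (hu0 : ((K, c) ∈ D1 V V' UM uMx umx ∧ ∃ u1 u2, ZerosD1 V K c u1 u0 u2) ∨
      ((K, c) ∈ D2 V V' umx K₁ ∧ ∃ u2, ZerosD2 V K c u0 u2)) :
    0 < u0 ∧ fTV V K c u0 = 0 ∧ fdTV V' K u0 < 0 := by
  rcases hu0 with ⟨hD, u1, u2, hz⟩ | ⟨hD, u2, hz⟩
  · exact ⟨hz.1.trans hz.2.1, hz.2.2.2.2.1, h.fdTV_neg_of_mem_D1 hD hz⟩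
  · exact ⟨hz.1, hz.2.2.1, h.fdTV_neg_of_mem_D2 hD hz⟩

end Equilibrium

theorem stmt2_general {V V' κ : ℝ → ℝ} {τ K c u0 : ℝ} (hV : ∀ x ∈ Ioi 0, HasDerivAt V (V' x) x)
    (hV' : ContDiffOn ℝ 1 V' (Ioi 0)) (hA2 : A2 κ) (hτ : 0 < τ) (hu0 : 0 < u0)
    (hf : fTV V K c u0 = 0) (hfd : fdTV V' K u0 < 0) (μ : ℝ) :
    ¬ HasHO V V' κ τ K c μ u0 := by
  rintro ⟨u, w, hsol, hpos, hubot, hutop, hwbot, hwtop, hne⟩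
  have hg1 := contDiffOn_g1TV hA2 hτ
  have hfTV : ContDiffOn ℝ 1 (fTV V K c) (Ioi 0) := contDiffOn_one_of_hasDerivAt isOpen_Ioi
    (fun x hx => hasDerivAt_fTV (hV x hx)) (contDiffOn_fdTV hV').continuousOn
  have hG : HasDerivAt (fun x => g1TV κ τ x * fTV V K c x) (g1TV κ τ u0 * fdTV V' K u0) u0 := by
    have hg1_deriv := ((hg1.contDiffAt (Ioi_mem_nhds hu0)).differentiableAt one_ne_zero).hasDerivAt
    exact (hg1_deriv.mul (hasDerivAt_fTV (hV u0 hu0))).congr_deriv (by rw [hf]; ring)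
  have hphase : ∀ {l : Filter ℝ}, Tendsto u l (nhds u0) → Tendsto w l (nhds 0) →
      Tendsto (fun z => (⟨u z, w z⟩ : ℂ)) l (nhds u0) := fun hu hw =>
    (Complex.equivRealProdCLM.symm.continuous.tendsto (u0, 0)).comp (hu.prodMk_nhds hw)
  have hconst := isIntegralCurve_lienardField_eq_of_tendsto isOpen_Ioi (hg1.mul hfTV)
    ((contDiffOn_g2TV hA2 hτ).mul ((contDiffOn_fdTV hV').add contDiffOn_const)) hu0
    (mul_eq_zero_of_right _ hf) hG (mul_neg_of_pos_of_neg (g1TV_pos hA2 hτ hu0) hfd)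
    (isIntegralCurve_lienardField_of_isTVSol hsol) hpos (hphase hubot hwbot) (hphase hutop hwtop)
  exact hne fun z => Complex.ext_iff.1 (hconst z)

theorem stmt2
    (V V' V'' κ : ℝ → ℝ) (τ UM K c K₁ : ℝ) (uMx umx : ℝ → ℝ)
    (hA1 : A1 V V' V'' UM) (hA2 : A2 κ) (hτ : 0 < τ) (hK : K ≠ 0)
    (huMx : UMaxHyp V' UM uMx) (humx : UMinHyp V' UM umx)
    (hK1 : K1Hyp V V' UM umx K₁)
    (u0 : ℝ)
    (hu0 : ((K, c) ∈ D1 V V' UM uMx umx ∧ ∃ u1 u2, ZerosD1 V K c u1 u0 u2) ∨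
           ((K, c) ∈ D2 V V' umx K₁ ∧ ∃ u2, ZerosD2 V K c u0 u2)) :
    ∀ μ : ℝ, ¬ HasHO V V' κ τ K c μ u0 := by
  obtain ⟨hpos, hf, hfd⟩ := hA1.equilibrium_of_mem_D1_or_mem_D2 hu0
  exact stmt2_general hA1.hasDerivAt hA1.contDiffOn_deriv hA2 hτ hpos hf hfd

end TrafficTW
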